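/- Let R be an associative unital ring and let ℰ be an exact structure on the category Mod R of right R-modules such that Mod R has enough ℰ-projectives and enough ℰ-injectives and ℰ contains all pure exact sequences. Let 𝒴 be a class of pure injective right R-modules that is closed under taking ℰ-cosyzygies, i.e., for every Y ∈ 𝒴 and every conflation 0 → Y → I → C → 0 with I ℰ-injective, C ∈ 𝒴. Then (^⊥𝒴, (^⊥𝒴)^⊥) is a complete hereditary ℰ-cotorsion pair. -/

import Mathlib

open CategoryTheory Category Limits

universe v u

namespace ExactPaper

variable {𝒜 : Type u} [Category.{v} 𝒜] [Abelian 𝒜]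

/-- A morphism is an admissible monic w.r.t. a class `c` of short complexes if it occurs
as the first map of a member of `c`. -/
def AdmMono (c : ShortComplex 𝒜 → Prop) {X Y : 𝒜} (f : X ⟶ Y) : Prop :=
  ∃ (Z : 𝒜) (g : Y ⟶ Z) (w : f ≫ g = 0), c (ShortComplex.mk f g w)

/-- A morphism is an admissible epic w.r.t. a class `c` of short complexes if it occurs
as the second map of a member of `c`. -/
def AdmEpi (c : ShortComplex 𝒜 → Prop) {Y Z : 𝒜} (g : Y ⟶ Z) : Prop :=
  ∃ (X : 𝒜) (f : X ⟶ Y) (w : f ≫ g = 0), c (ShortComplex.mk f g w)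

/-- A (Quillen) exact structure on an abelian category `𝒜`: a class of short exact
sequences, called conflations, closed under isomorphisms, containing all split short
exact sequences, such that admissible monics and epics are closed under composition,
pushouts of admissible monics along arbitrary morphisms are admissible monics and
pullbacks of admissible epics along arbitrary morphisms are admissible epics. -/
structure ExactStructure (𝒜 : Type u) [Category.{v} 𝒜] [Abelian 𝒜] where
  conflation : ShortComplex 𝒜 → Prop
  shortExact_of_conflation : ∀ (S : ShortComplex 𝒜), conflation S → S.ShortExact
  conflation_of_iso : ∀ (S T : ShortComplex 𝒜), (S ≅ T) → conflation S → conflation T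
  conflation_of_splitting : ∀ (S : ShortComplex 𝒜), S.Splitting → conflation S
  admMono_comp : ∀ {X Y Z : 𝒜} (f : X ⟶ Y) (g : Y ⟶ Z),
    AdmMono conflation f → AdmMono conflation g → AdmMono conflation (f ≫ g)
  admEpi_comp : ∀ {X Y Z : 𝒜} (f : X ⟶ Y) (g : Y ⟶ Z),
    AdmEpi conflation f → AdmEpi conflation g → AdmEpi conflation (f ≫ g)
  admMono_pushout : ∀ {L M M' : 𝒜} (i : L ⟶ M) (f : L ⟶ M'),
    AdmMono conflation i → AdmMono conflation (pushout.inr i f)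
  admEpi_pullback : ∀ {M N M' : 𝒜} (p : M ⟶ N) (g : M' ⟶ N),
    AdmEpi conflation p → AdmEpi conflation (pullback.snd p g)

namespace ExactStructure

variable (E : ExactStructure 𝒜)

/-- An `ℰ`-projective object. -/
def EProjective (P : 𝒜) : Prop :=
  ∀ (S : ShortComplex 𝒜), E.conflation S → ∀ h : P ⟶ S.X₃, ∃ k : P ⟶ S.X₂, k ≫ S.g = h

/-- An `ℰ`-injective object. -/
def EInjective (I : 𝒜) : Prop :=
  ∀ (S : ShortComplex 𝒜), E.conflation S → ∀ h : S.X₁ ⟶ I, ∃ k : S.X₂ ⟶ I, S.f ≫ k = h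

/-- `𝒜` has enough `ℰ`-projectives. -/
def EnoughProjectives : Prop :=
  ∀ M : 𝒜, ∃ (K P : 𝒜) (i : K ⟶ P) (p : P ⟶ M) (w : i ≫ p = 0),
    E.conflation (ShortComplex.mk i p w) ∧ E.EProjective P

/-- `𝒜` has enough `ℰ`-injectives. -/
def EnoughInjectives : Prop :=
  ∀ M : 𝒜, ∃ (I C : 𝒜) (i : M ⟶ I) (p : I ⟶ C) (w : i ≫ p = 0),
    E.conflation (ShortComplex.mk i p w) ∧ E.EInjective I

/-- `Ext¹_ℰ(M,N) = 0`: every conflation `0 → N → Z → M → 0` splits. -/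
def Ext1Zero (M N : 𝒜) : Prop :=
  ∀ (Z : 𝒜) (i : N ⟶ Z) (p : Z ⟶ M) (w : i ≫ p = 0),
    E.conflation (ShortComplex.mk i p w) → ∃ r : Z ⟶ N, i ≫ r = 𝟙 N

/-- The right `ℰ`-orthogonal class `𝒳^⊥`. -/
def rightPerp (𝒳 : Set 𝒜) : Set 𝒜 := {N | ∀ X ∈ 𝒳, E.Ext1Zero X N}

/-- The left `ℰ`-orthogonal class `^⊥𝒴`. -/
def leftPerp (𝒴 : Set 𝒜) : Set 𝒜 := {M | ∀ Y ∈ 𝒴, E.Ext1Zero M Y}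

/-- A class is closed under `ℰ`-extensions. -/
def ClosedUnderExtensions (𝒯 : Set 𝒜) : Prop :=
  ∀ S : ShortComplex 𝒜, E.conflation S → S.X₁ ∈ 𝒯 → S.X₃ ∈ 𝒯 → S.X₂ ∈ 𝒯

/-- An `ℰ`-resolving class. -/
def Resolving (𝒯 : Set 𝒜) : Prop :=
  (∀ P : 𝒜, E.EProjective P → P ∈ 𝒯) ∧ E.ClosedUnderExtensions 𝒯 ∧
    ∀ S : ShortComplex 𝒜, E.conflation S → S.X₂ ∈ 𝒯 → S.X₃ ∈ 𝒯 → S.X₁ ∈ 𝒯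

/-- An `ℰ`-coresolving class. -/
def Coresolving (𝒯 : Set 𝒜) : Prop :=
  (∀ I : 𝒜, E.EInjective I → I ∈ 𝒯) ∧ E.ClosedUnderExtensions 𝒯 ∧
    ∀ S : ShortComplex 𝒜, E.conflation S → S.X₁ ∈ 𝒯 → S.X₂ ∈ 𝒯 → S.X₃ ∈ 𝒯

/-- `(𝒳,𝒴)` is a complete hereditary `ℰ`-cotorsion pair. -/
def CompleteHereditaryCotorsionPair (𝒳 𝒴 : Set 𝒜) : Prop :=
  𝒳 = E.leftPerp 𝒴 ∧ 𝒴 = E.rightPerp 𝒳 ∧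
  (∀ A : 𝒜, ∃ (Y X : 𝒜) (i : Y ⟶ X) (p : X ⟶ A) (w : i ≫ p = 0),
      E.conflation (ShortComplex.mk i p w) ∧ X ∈ 𝒳 ∧ Y ∈ 𝒴) ∧
  (∀ A : 𝒜, ∃ (Y' X' : 𝒜) (i : A ⟶ Y') (p : Y' ⟶ X') (w : i ≫ p = 0),
      E.conflation (ShortComplex.mk i p w) ∧ X' ∈ 𝒳 ∧ Y' ∈ 𝒴) ∧
  E.Resolving 𝒳

end ExactStructure

/-- `f : X ⟶ A` is an `𝒳`-precover of `A`. -/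
def IsPrecover (𝒳 : Set 𝒜) {X A : 𝒜} (f : X ⟶ A) : Prop :=
  X ∈ 𝒳 ∧ ∀ X' : 𝒜, X' ∈ 𝒳 → ∀ g : X' ⟶ A, ∃ h : X' ⟶ X, h ≫ f = g

/-- `f : X ⟶ A` is an `𝒳`-cover of `A`. -/
def IsCover (𝒳 : Set 𝒜) {X A : 𝒜} (f : X ⟶ A) : Prop :=
  IsPrecover 𝒳 f ∧ ∀ h : X ⟶ X, h ≫ f = f → IsIso h

/-- `f : A ⟶ Y` is a `𝒴`-preenvelope of `A`. -/
def IsPreenvelope (𝒴 : Set 𝒜) {A Y : 𝒜} (f : A ⟶ Y) : Prop :=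
  Y ∈ 𝒴 ∧ ∀ Y' : 𝒜, Y' ∈ 𝒴 → ∀ g : A ⟶ Y', ∃ h : Y ⟶ Y', f ≫ h = g

/-- `f : A ⟶ Y` is a `𝒴`-envelope of `A`. -/
def IsEnvelope (𝒴 : Set 𝒜) {A Y : 𝒜} (f : A ⟶ Y) : Prop :=
  IsPreenvelope 𝒴 f ∧ ∀ h : Y ⟶ Y, f ≫ h = f → IsIso h

/-- A class of objects closed under isomorphisms. -/
def ClosedUnderIsos (𝒳 : Set 𝒜) : Prop := ∀ X Y : 𝒜, (X ≅ Y) → X ∈ 𝒳 → Y ∈ 𝒳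

/-- A class of objects closed under direct summands. -/
def ClosedUnderDirectSummands (𝒳 : Set 𝒜) : Prop :=
  ∀ X Y : 𝒜, (∃ (s : Y ⟶ X) (r : X ⟶ Y), s ≫ r = 𝟙 Y) → X ∈ 𝒳 → Y ∈ 𝒳

end ExactPaper

namespace ExactPaper

open CategoryTheory Limits

variable {R : Type u} [Ring R]

/-- A pure exact sequence of right `R`-modules (i.e. of `Rᵐᵒᵖ`-modules): a short exact
sequence which stays exact after applying `Hom_R(F, −)` for every finitely presented
right `R`-module `F`. -/
def PureSES (S : ShortComplex (ModuleCat.{u} Rᵐᵒᵖ)) : Prop :=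
  S.ShortExact ∧ ∀ F : ModuleCat.{u} Rᵐᵒᵖ, Module.FinitePresentation Rᵐᵒᵖ F →
    ∀ h : F ⟶ S.X₃, ∃ k : F ⟶ S.X₂, k ≫ S.g = h

/-- A pure projective right `R`-module: projective with respect to pure exact sequences. -/
def PureProjective (P : ModuleCat.{u} Rᵐᵒᵖ) : Prop :=
  ∀ S : ShortComplex (ModuleCat.{u} Rᵐᵒᵖ), PureSES S →
    ∀ h : P ⟶ S.X₃, ∃ k : P ⟶ S.X₂, k ≫ S.g = h

/-- A pure injective right `R`-module: injective with respect to pure exact sequences. -/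
def PureInjective (I : ModuleCat.{u} Rᵐᵒᵖ) : Prop :=
  ∀ S : ShortComplex (ModuleCat.{u} Rᵐᵒᵖ), PureSES S →
    ∀ h : S.X₁ ⟶ I, ∃ k : S.X₂ ⟶ I, S.f ≫ k = h

end ExactPaper

/-!
The class `^⊥𝒴` is closed under pure quotients, because the members of `𝒴` are pure injective, and
therefore under pure submodules, because closure of `𝒴` under cosyzygies makes `^⊥𝒴` resolving.
Every element of a module lies in a pure submodule whose size is bounded in terms of `R`, so each
member of `^⊥𝒴` has a continuous filtration by pure submodules whose factors are small members of
`^⊥𝒴`. Hence the pair is generated by a set. As every `ℰ`-syzygy inclusion is a monomorphism, the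
small object argument applies and produces the left approximating conflations; the right ones follow
by Salce's pullback construction.
-/

namespace ExactPaper

attribute [local simp] pullback.lift_fst pullback.lift_snd pullback.lift_fst_assoc
  pullback.lift_snd_assoc pushout.inl_desc pushout.inr_desc pushout.inl_desc_assoc
  pushout.inr_desc_assoc

section AbelianCategory

variable {𝒜 : Type u} [Category.{v} 𝒜] [Abelian 𝒜]

lemma shortExact_pullback {T : ShortComplex 𝒜} (hT : T.ShortExact) {M : 𝒜} (f : M ⟶ T.X₃) :
    (ShortComplex.mk (pullback.lift T.f (0 : T.X₁ ⟶ M) (by simp)) (pullback.snd T.g f)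
      (pullback.lift_snd _ _ _)).ShortExact := by
  have := hT.mono_f
  have := hT.epi_g
  have mono_lift : Mono (pullback.lift (f := T.g) (g := f) T.f 0 (by simp)) :=
    mono_of_mono_fac (pullback.lift_fst _ _ _)
  refine .mk' (ShortComplex.exact_of_f_is_kernel _ ?_) mono_lift inferInstance
  refine KernelFork.IsLimit.ofι' _ _ fun k hk ↦ ?_
  have hk' : (k ≫ pullback.fst T.g f) ≫ T.g = 0 := by
    rw [assoc, pullback.condition, reassoc_of% hk, zero_comp]
  exact ⟨hT.exact.lift _ hk', pullback.hom_ext (by simp) (by simpa using hk.symm)⟩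

lemma shortExact_pushout {T : ShortComplex 𝒜} (hT : T.ShortExact) {N : 𝒜} (f : T.X₁ ⟶ N) :
    (ShortComplex.mk (pushout.inr T.f f) (pushout.desc T.g (0 : N ⟶ T.X₃) (by simp))
      (pushout.inr_desc _ _ _)).ShortExact := by
  have := hT.mono_f
  have := hT.epi_g
  have epi_desc : Epi (pushout.desc (f := T.f) (g := f) T.g 0 (by simp)) :=
    epi_of_epi_fac (pushout.inl_desc _ _ _)
  refine .mk' (ShortComplex.exact_of_g_is_cokernel _ ?_) inferInstance epi_desc
  refine CokernelCofork.IsColimit.ofπ' _ _ fun k hk ↦ ?_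
  have hk' : T.f ≫ pushout.inl T.f f ≫ k = 0 := by
    rw [pushout.condition_assoc, hk, comp_zero]
  exact ⟨hT.exact.desc _ hk', pushout.hom_ext (by simp) (by simpa using hk.symm)⟩

end AbelianCategory

namespace ExactStructure

variable {𝒜 : Type u} [Category.{v} 𝒜] [Abelian 𝒜] {E : ExactStructure 𝒜}
  {S T : ShortComplex 𝒜}

lemma conflation_of_admEpi (hS : S.ShortExact) (h : AdmEpi E.conflation S.g) :
    E.conflation S := by
  obtain ⟨X, f, w, hf⟩ := h
  have hT := E.shortExact_of_conflation _ hf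
  refine E.conflation_of_iso (.mk f S.g w) S (ShortComplex.isoMk
    (hT.fIsKernel.conePointUniqueUpToIso hS.fIsKernel) (Iso.refl _) (Iso.refl _) ?_ ?_) hf
  · simpa using
      IsLimit.conePointUniqueUpToIso_hom_comp hT.fIsKernel hS.fIsKernel WalkingParallelPair.zero
  · simp

lemma conflation_of_admMono (hS : S.ShortExact) (h : AdmMono E.conflation S.f) :
    E.conflation S := by
  obtain ⟨X, g, w, hg⟩ := h
  have hT := E.shortExact_of_conflation _ hg
  refine E.conflation_of_iso (.mk S.f g w) S (ShortComplex.isoMk (Iso.refl _) (Iso.refl _)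
    (hT.gIsCokernel.coconePointUniqueUpToIso hS.gIsCokernel) ?_ ?_) hg
  · simp
  · simpa using (IsColimit.comp_coconePointUniqueUpToIso_hom hT.gIsCokernel hS.gIsCokernel
      WalkingParallelPair.one).symm

lemma conflation_pullback (hT : E.conflation T) {M : 𝒜} (f : M ⟶ T.X₃) :
    E.conflation (ShortComplex.mk (pullback.lift T.f (0 : T.X₁ ⟶ M) (by simp))
      (pullback.snd T.g f) (pullback.lift_snd _ _ _)) :=
  conflation_of_admEpi (shortExact_pullback (E.shortExact_of_conflation _ hT) f)
    (E.admEpi_pullback T.g f ⟨_, _, _, hT⟩)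

lemma conflation_pushout (hT : E.conflation T) {N : 𝒜} (f : T.X₁ ⟶ N) :
    E.conflation (ShortComplex.mk (pushout.inr T.f f)
      (pushout.desc T.g (0 : N ⟶ T.X₃) (by simp)) (pushout.inr_desc _ _ _)) :=
  conflation_of_admMono (shortExact_pushout (E.shortExact_of_conflation _ hT) f)
    (E.admMono_pushout T.f f ⟨_, _, _, hT⟩)

lemma conflation_of_isIso_τ₃ (φ : S ⟶ T) [IsIso φ.τ₃] (hS : E.conflation S)
    (hT : T.ShortExact) : E.conflation T := by
  have hpo := conflation_pushout hS φ.τ₁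
  let ψ : ShortComplex.mk (pushout.inr S.f φ.τ₁)
      (pushout.desc S.g (0 : T.X₁ ⟶ S.X₃) (by simp)) (pushout.inr_desc _ _ _) ⟶ T :=
    { τ₁ := 𝟙 _
      τ₂ := pushout.desc φ.τ₂ T.f φ.comm₁₂.symm
      τ₃ := φ.τ₃
      comm₂₃ := pushout.hom_ext (by simp [φ.comm₂₃]) (by simp) }
  have : IsIso ψ.τ₁ := inferInstanceAs (IsIso (𝟙 T.X₁))
  have : IsIso ψ.τ₃ := inferInstanceAs (IsIso φ.τ₃)
  have : IsIso ψ.τ₂ :=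
    ShortComplex.isIso₂_of_shortExact_of_isIso₁₃ ψ (E.shortExact_of_conflation _ hpo) hT
  have : IsIso ψ := ShortComplex.isIso_of_isIso ψ
  exact E.conflation_of_iso _ _ (asIso ψ) hpo

lemma conflation_kernel_of_admEpi_comp {A B C : 𝒜} (f : A ⟶ B) (g : B ⟶ C)
    (h : AdmEpi E.conflation (f ≫ g)) :
    E.conflation (ShortComplex.mk (kernel.ι g) g (kernel.condition g)) := by
  obtain ⟨K, i, w, hi⟩ := h
  have : Epi (f ≫ g) := (E.shortExact_of_conflation _ hi).epi_g
  have hg : Epi g := epi_of_epi f g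
  let φ : ShortComplex.mk i (f ≫ g) w ⟶
      ShortComplex.mk (kernel.ι g) g (kernel.condition g) :=
    { τ₁ := kernel.lift g (i ≫ f) (by rw [assoc, w])
      τ₂ := f
      τ₃ := 𝟙 C }
  have : IsIso φ.τ₃ := inferInstanceAs (IsIso (𝟙 C))
  exact conflation_of_isIso_τ₃ φ hi (.mk' (ShortComplex.exact_kernel g) inferInstance hg)

lemma ext1Zero_of_exists_section {M N : 𝒜}
    (h : ∀ (Z : 𝒜) (i : N ⟶ Z) (p : Z ⟶ M) (w : i ≫ p = 0),
      E.conflation (ShortComplex.mk i p w) → ∃ s : M ⟶ Z, s ≫ p = 𝟙 M) :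
    E.Ext1Zero M N := by
  intro Z i p w hip
  obtain ⟨s, hs⟩ := h Z i p w hip
  have hse := E.shortExact_of_conflation _ hip
  let splitting := ShortComplex.Splitting.ofExactOfSection _ hse.exact s hs hse.mono_f
  exact ⟨splitting.r, splitting.f_r⟩

lemma Ext1Zero.exists_lift {M : 𝒜} (h : E.Ext1Zero M T.X₁) (hT : E.conflation T)
    (f : M ⟶ T.X₃) : ∃ g : M ⟶ T.X₂, g ≫ T.g = f := by
  have hpb := conflation_pullback hT f
  have hse := E.shortExact_of_conflation _ hpb
  obtain ⟨r, hr⟩ := h _ _ _ _ hpb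
  let splitting := ShortComplex.Splitting.ofExactOfRetraction _ hse.exact r hr hse.epi_g
  refine ⟨splitting.s ≫ pullback.fst T.g f, ?_⟩
  rw [assoc, pullback.condition, ← assoc, splitting.s_g, id_comp]

lemma Ext1Zero.exists_extension {N : 𝒜} (h : E.Ext1Zero T.X₃ N) (hT : E.conflation T)
    (f : T.X₁ ⟶ N) : ∃ g : T.X₂ ⟶ N, T.f ≫ g = f := by
  obtain ⟨r, hr⟩ := h _ _ _ _ (conflation_pushout hT f)
  exact ⟨pushout.inl T.f f ≫ r, by rw [pushout.condition_assoc, hr, comp_id]⟩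

lemma Ext1Zero.of_iso {M M' N : 𝒜} (h : E.Ext1Zero M N) (e : M ≅ M') : E.Ext1Zero M' N :=
  fun Z i p w hip ↦ h Z i (p ≫ e.inv) (by rw [reassoc_of% w, zero_comp])
    (E.conflation_of_iso (.mk i p w) _
      (ShortComplex.isoMk (Iso.refl _) (Iso.refl _) e.symm) hip)

lemma EProjective.ext1Zero {P : 𝒜} (hP : E.EProjective P) (N : 𝒜) : E.Ext1Zero P N :=
  ext1Zero_of_exists_section fun _ _ _ _ hip ↦ hP _ hip (𝟙 P)

lemma EInjective.ext1Zero_of_exists_lift (hT₂ : E.EInjective T.X₂) (hT : T.ShortExact) {M : 𝒜}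
    (h : ∀ f : M ⟶ T.X₃, ∃ g : M ⟶ T.X₂, g ≫ T.g = f) : E.Ext1Zero M T.X₁ := by
  intro Z a b w hab
  have hse := E.shortExact_of_conflation _ hab
  have := hse.epi_g
  have := hT.mono_f
  obtain ⟨k, hk⟩ : ∃ k : Z ⟶ T.X₂, a ≫ k = T.f := hT₂ _ hab T.f
  obtain ⟨d, hd⟩ := hse.exact.desc' (k ≫ T.g) (by simp [reassoc_of% hk])
  obtain ⟨g, hg⟩ := h d
  obtain ⟨r, hr⟩ := hT.exact.lift' (k - b ≫ g) (by
    rw [Preadditive.sub_comp, assoc, hg, sub_eq_zero]; exact hd.symm)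
  refine ⟨r, ?_⟩
  rw [← cancel_mono T.f, assoc, hr, Preadditive.comp_sub, hk, reassoc_of% w, zero_comp, sub_zero,
    id_comp]

lemma EProjective.ext1Zero_of_exists_extension (hS₂ : E.EProjective S.X₂) (hS : S.ShortExact)
    {N : 𝒜} (h : ∀ f : S.X₁ ⟶ N, ∃ g : S.X₂ ⟶ N, S.f ≫ g = f) : E.Ext1Zero S.X₃ N := by
  refine ext1Zero_of_exists_section fun Z a b w hab ↦ ?_
  have hse := E.shortExact_of_conflation _ hab
  have := hse.mono_f
  have := hS.epi_g
  obtain ⟨k, hk⟩ : ∃ k : S.X₂ ⟶ Z, k ≫ b = S.g := hS₂ _ hab S.g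
  obtain ⟨l, hl⟩ := hse.exact.lift' (S.f ≫ k) (by simp [hk])
  obtain ⟨g, hg⟩ := h l
  obtain ⟨s, hs⟩ := hS.exact.desc' (k - g ≫ a) (by
    rw [Preadditive.comp_sub, reassoc_of% hg, sub_eq_zero]; exact hl.symm)
  refine ⟨s, ?_⟩
  rw [← cancel_epi S.g, reassoc_of% hs, Preadditive.sub_comp, hk, assoc, w, comp_zero, sub_zero,
    comp_id]

/- `EInjective T.X₂` provides some extension `k` of the given map along `S.f`; the error
`φ - k ≫ T.g` then factors through `S.X₃`, where it can be lifted. -/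
lemma EInjective.hasLiftingProperty (hT₂ : E.EInjective T.X₂) (hT : E.conflation T)
    (hS : E.conflation S) (h : E.Ext1Zero S.X₃ T.X₁) : HasLiftingProperty S.f T.g where
  sq_hasLift {s φ} sq := by
    obtain ⟨k, hk⟩ := hT₂ S hS s
    have hse := E.shortExact_of_conflation S hS
    have := hse.epi_g
    obtain ⟨d, hd⟩ := hse.exact.desc' (φ - k ≫ T.g) (by
      rw [Preadditive.comp_sub, reassoc_of% hk, sq.w, sub_self])
    obtain ⟨g, hg⟩ := h.exists_lift hT d
    refine ⟨⟨⟨k + S.g ≫ g, ?_, ?_⟩⟩⟩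
    · rw [Preadditive.comp_add, hk, S.zero_assoc, zero_comp, add_zero]
    · rw [Preadditive.add_comp, assoc, hg, hd, add_sub_cancel]

lemma EProjective.hasLiftingProperty (hS₂ : E.EProjective S.X₂) (hS : E.conflation S)
    (hT : E.conflation T) (h : E.Ext1Zero S.X₃ T.X₁) : HasLiftingProperty S.f T.g where
  sq_hasLift {s φ} sq := by
    obtain ⟨k, hk⟩ := hS₂ T hT φ
    have hse := E.shortExact_of_conflation T hT
    have := hse.mono_f
    obtain ⟨l, hl⟩ := hse.exact.lift' (s - S.f ≫ k) (by
      rw [Preadditive.sub_comp, assoc, hk, sq.w, sub_self])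
    obtain ⟨g, hg⟩ := h.exists_extension hS l
    refine ⟨⟨⟨k + g ≫ T.f, ?_, ?_⟩⟩⟩
    · rw [Preadditive.comp_add, reassoc_of% hg, hl, add_sub_cancel]
    · rw [Preadditive.add_comp, hk, assoc, T.zero, comp_zero, add_zero]

lemma EInjective.ext1Zero_of_hasLiftingProperty (hT₂ : E.EInjective T.X₂)
    (hT : E.conflation T) {P Z : 𝒜} (hP : E.EProjective P) (i : P ⟶ Z)
    [HasLiftingProperty i T.g] : E.Ext1Zero Z T.X₁ := by
  refine hT₂.ext1Zero_of_exists_lift (E.shortExact_of_conflation T hT) fun φ ↦ ?_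
  obtain ⟨s, hs⟩ := hP T hT (i ≫ φ)
  have sq : CommSq s i T.g φ := ⟨hs⟩
  exact ⟨sq.lift, sq.fac_right⟩

lemma EProjective.ext1Zero_of_hasLiftingProperty (hS₂ : E.EProjective S.X₂)
    (hS : S.ShortExact) (hT : T.Exact) [Mono T.f] [HasLiftingProperty S.f T.g] :
    E.Ext1Zero S.X₃ T.X₁ := by
  refine hS₂.ext1Zero_of_exists_extension hS fun f ↦ ?_
  have sq : CommSq (f ≫ T.f) S.f T.g 0 := ⟨by simp⟩
  obtain ⟨g, hg⟩ := hT.lift' sq.lift sq.fac_right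
  exact ⟨g, by rw [← cancel_mono T.f, assoc, hg, sq.fac_left]⟩

lemma subset_leftPerp_rightPerp (E : ExactStructure 𝒜) (𝒳 : Set 𝒜) :
    𝒳 ⊆ E.leftPerp (E.rightPerp 𝒳) :=
  fun _ hX _ hY ↦ hY _ hX

lemma leftPerp_rightPerp_leftPerp (E : ExactStructure 𝒜) (𝒴 : Set 𝒜) :
    E.leftPerp (E.rightPerp (E.leftPerp 𝒴)) = E.leftPerp 𝒴 :=
  Set.Subset.antisymm (fun _ hX Y hY ↦ hX Y fun _ hX' ↦ hX' Y hY)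
    (E.subset_leftPerp_rightPerp _)

lemma closedUnderIsos_leftPerp (E : ExactStructure 𝒜) (𝒴 : Set 𝒜) :
    ClosedUnderIsos (E.leftPerp 𝒴) :=
  fun _ _ e hX Y hY ↦ (hX Y hY).of_iso e

lemma closedUnderExtensions_leftPerp (hinj : E.EnoughInjectives) (𝒴 : Set 𝒜) :
    E.ClosedUnderExtensions (E.leftPerp 𝒴) := by
  intro S hS h₁ h₃ Y hY
  obtain ⟨J, C, i, p, w, hip, hJ⟩ := hinj Y
  refine hJ.ext1Zero_of_exists_lift (T := .mk i p w) (E.shortExact_of_conflation _ hip)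
    fun φ ↦ ?_
  obtain ⟨s, hs⟩ := (h₁ Y hY).exists_lift hip (S.f ≫ φ)
  have := hJ.hasLiftingProperty hip hS (h₃ Y hY)
  have sq : CommSq s S.f p φ := ⟨hs⟩
  exact ⟨sq.lift, sq.fac_right⟩

lemma resolving_leftPerp (hinj : E.EnoughInjectives) {𝒴 : Set 𝒜}
    (hcosyz : ∀ Y ∈ 𝒴, ∀ (I C : 𝒜) (i : Y ⟶ I) (p : I ⟶ C)
      (w : i ≫ p = 0), E.conflation (ShortComplex.mk i p w) → E.EInjective I → C ∈ 𝒴) :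
    E.Resolving (E.leftPerp 𝒴) := by
  refine ⟨fun P hP Y _ ↦ hP.ext1Zero Y, closedUnderExtensions_leftPerp hinj 𝒴, ?_⟩
  intro S hS h₂ h₃ Y hY
  obtain ⟨J, C, i, p, w, hip, hJ⟩ := hinj Y
  refine hJ.ext1Zero_of_exists_lift (T := .mk i p w) (E.shortExact_of_conflation _ hip)
    fun φ ↦ ?_
  obtain ⟨ψ, hψ⟩ := (h₃ C (hcosyz Y hY J C i p w hip hJ)).exists_extension hS φ
  obtain ⟨s, hs⟩ := (h₂ Y hY).exists_lift hip ψ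
  exact ⟨S.f ≫ s, by rw [assoc, hs, hψ]⟩

lemma mem_rightPerp_pullback_of_eInjective (hproj : E.EnoughProjectives) {𝒳 : Set 𝒜}
    (hT : E.conflation T) (hT₁ : T.X₁ ∈ E.rightPerp 𝒳) {J : 𝒜} (hJ : E.EInjective J)
    (q : J ⟶ T.X₃) : pullback q T.g ∈ E.rightPerp 𝒳 := by
  intro X hX
  obtain ⟨K, P, k, r, w, hkr, hP⟩ := hproj X
  refine hP.ext1Zero_of_exists_extension (S := .mk k r w) (E.shortExact_of_conflation _ hkr)
    fun a ↦ ?_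
  obtain ⟨b, hb⟩ : ∃ b : P ⟶ J, k ≫ b = a ≫ pullback.fst q T.g := hJ _ hkr _
  have : HasLiftingProperty k T.g := hP.hasLiftingProperty hkr hT (hT₁ X hX)
  have sq : CommSq (a ≫ pullback.snd q T.g) k T.g (b ≫ q) :=
    ⟨by rw [assoc, ← pullback.condition, reassoc_of% hb]⟩
  exact ⟨pullback.lift b sq.lift sq.fac_right.symm,
    pullback.hom_ext (by simpa using hb) (by simp)⟩

/- Salce's lemma: the preenvelope of `A` is the pullback of an approximation `X ⟶ C` of an
`ℰ`-cosyzygy `C` of `A` along the deflation `J ⟶ C`. -/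
lemma exists_conflation_preenvelope (hproj : E.EnoughProjectives) (hinj : E.EnoughInjectives)
    {𝒳 : Set 𝒜}
    (precover : ∀ A : 𝒜, ∃ (Y X : 𝒜) (i : Y ⟶ X) (p : X ⟶ A) (w : i ≫ p = 0),
      E.conflation (ShortComplex.mk i p w) ∧ X ∈ 𝒳 ∧ Y ∈ E.rightPerp 𝒳) (A : 𝒜) :
    ∃ (Y X : 𝒜) (i : A ⟶ Y) (p : Y ⟶ X) (w : i ≫ p = 0),
      E.conflation (ShortComplex.mk i p w) ∧ X ∈ 𝒳 ∧ Y ∈ E.rightPerp 𝒳 := by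
  obtain ⟨J, C, j, q, _, hjq, hJ⟩ := hinj A
  obtain ⟨Y, X, i, p, _, hip, hX, hY⟩ := precover C
  exact ⟨_, X, _, _, _, conflation_pullback hjq p, hX,
    mem_rightPerp_pullback_of_eInjective hproj hip hY hJ q⟩

end ExactStructure

section SmallObjectArgument

universe w

open MorphismProperty HomotopicalAlgebra

variable {𝒞 : Type u} [Category.{v} 𝒞] [Abelian 𝒞] [IsGrothendieckAbelian.{w} 𝒞]

lemma mono_relativeCellComplex_F_map {I : MorphismProperty 𝒞} (hI : I ≤ monomorphisms 𝒞)
    {J : Type w} [LinearOrder J] [OrderBot J] [SuccOrder J] [WellFoundedLT J]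
    {X Y : 𝒞} {f : X ⟶ Y} (hf : RelativeCellComplex.{w} (fun _ : J ↦ I.homFamily) f)
    {j j' : J} (φ : j ⟶ j') : Mono (hf.F.map φ) := by
  have cell_mono : (coproducts.{w} (ofHoms I.homFamily)).pushouts ≤ monomorphisms 𝒞 := by
    simpa only [ofHoms_homFamily, pushouts_le_iff, coproducts_le_iff] using hI
  let composition : (monomorphisms 𝒞).TransfiniteCompositionOfShape J f :=
    { toTransfiniteCompositionOfShape := hf.toTransfiniteCompositionOfShape
      map_mem j hj := cell_mono _ (hf.attachCells j hj).pushouts_coproducts }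
  exact composition.mem_map φ

lemma hasSmallObjectArgument_of_le_monomorphisms (I : MorphismProperty 𝒞) [IsSmall.{w} I]
    (hI : I ≤ monomorphisms 𝒞) : HasSmallObjectArgument.{w} I := by
  obtain ⟨κ, hκ, card_lt⟩ := HasCardinalLT.exists_regular_cardinal_forall.{w}
    fun f : I.toSet ↦ Subobject f.1.left
  have : Fact κ.IsRegular := ⟨hκ⟩
  have : Nonempty κ.ord.ToType := by simpa using hκ.ne_zero
  let : OrderBot κ.ord.ToType := WellFoundedLT.toOrderBot _
  refine ⟨κ, inferInstance, inferInstance, { preservesColimit := fun i hi f hf ↦ ?_ }⟩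
  have (j j' : κ.ord.ToType) (φ : j ⟶ j') := mono_relativeCellComplex_F_map hI hf φ
  exact IsGrothendieckAbelian.preservesColimit_coyoneda_obj_of_mono _ (card_lt ⟨Arrow.mk i, hi⟩)

namespace ExactStructure

variable {E : ExactStructure 𝒞}

/- The Eklof-Trlifaj argument: for `I` the class of `ℰ`-syzygy inclusions of objects of `𝒮`, factor
a deflation from an `ℰ`-projective object as a morphism in `I.rlp.llp` followed by one in
`I.rlp`. -/
lemma exists_conflation_precover_of_small (hproj : E.EnoughProjectives)
    (hinj : E.EnoughInjectives) (𝒮 : Set 𝒞) [Small.{w} 𝒮] (A : 𝒞) :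
    ∃ (Y X : 𝒞) (i : Y ⟶ X) (p : X ⟶ A) (w : i ≫ p = 0),
      E.conflation (ShortComplex.mk i p w) ∧
        X ∈ E.leftPerp (E.rightPerp 𝒮) ∧ Y ∈ E.rightPerp 𝒮 := by
  choose K P k q w hkq hP using fun S : 𝒮 ↦ hproj S
  have hse (S : 𝒮) := E.shortExact_of_conflation _ (hkq S)
  let I := ofHoms k
  have : HasSmallObjectArgument.{w} I := hasSmallObjectArgument_of_le_monomorphisms I (by
    rintro _ _ _ ⟨S⟩
    exact (hse S).mono_f)
  obtain ⟨_, P', _, q', _, hq', hP'⟩ := hproj A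
  let F := factorizationData I.rlp.llp I.rlp q'
  refine ⟨kernel F.p, F.Z, kernel.ι F.p, F.p, kernel.condition _, ?_, fun N hN ↦ ?_,
    fun S hS ↦ ?_⟩
  · refine conflation_kernel_of_admEpi_comp F.i F.p ?_
    rw [F.fac]
    exact ⟨_, _, _, hq'⟩
  · obtain ⟨J, C, j, p, w', hjp, hJ⟩ := hinj N
    have rlp_p : I.rlp p := by
      rintro _ _ _ ⟨S⟩
      exact hJ.hasLiftingProperty hjp (hkq S) (hN S S.2)
    have := F.hi p rlp_p
    exact hJ.ext1Zero_of_hasLiftingProperty hjp hP' F.i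
  · have := F.hp _ (ofHoms.mk (f := k) ⟨S, hS⟩)
    exact (hP ⟨S, hS⟩).ext1Zero_of_hasLiftingProperty (hse ⟨S, hS⟩)
      (ShortComplex.exact_kernel F.p)

end ExactStructure

end SmallObjectArgument

section Purity

variable {T : Type u} [Ring T] {X Z : Type*} [AddCommGroup X] [Module T X] [AddCommGroup Z]
  [Module T Z]

/-- Purity of a submodule `P`, as solvability of finite linear systems: whenever the system with
coefficients `r` and right-hand side `φ ∘ₗ r` in `P` has a solution `φ` in the ambient module, it
has a solution in `P`. Systems and their solutions are encoded by linear maps out of finite free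
modules. -/
def IsPure (P : Submodule T X) : Prop :=
  ∀ ⦃m n : ℕ⦄ (r : (Fin m → T) →ₗ[T] (Fin n → T)) (φ : (Fin n → T) →ₗ[T] X),
    (∀ v, φ (r v) ∈ P) → ∃ ψ : (Fin n → T) →ₗ[T] X, (∀ v, ψ v ∈ P) ∧ ψ ∘ₗ r = φ ∘ₗ r

lemma isPure_bot : IsPure (⊥ : Submodule T X) :=
  fun _ _ _ _ hφ ↦ ⟨0, fun _ ↦ rfl, LinearMap.ext fun v ↦ (hφ v).symm⟩

lemma IsPure.comap_of_surjective {g : X →ₗ[T] Z} (hg : Function.Surjective g)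
    (hker : IsPure (LinearMap.ker g)) {P : Submodule T Z} (hP : IsPure P) :
    IsPure (P.comap g) := by
  intro m n r φ hφ
  obtain ⟨ψ, hψ, hψr⟩ := hP r (g ∘ₗ φ) hφ
  obtain ⟨ψ', rfl⟩ := Module.projective_lifting_property g ψ hg
  obtain ⟨χ, hχ, hχr⟩ := hker r (φ - ψ') fun v ↦ by
    simpa [sub_eq_zero] using (LinearMap.congr_fun hψr v).symm
  refine ⟨ψ' + χ, fun v ↦ ?_, ?_⟩
  · have : g (χ v) = 0 := hχ v
    simpa [this] using hψ v
  · rw [LinearMap.add_comp, hχr, LinearMap.sub_comp, add_sub_cancel]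

lemma IsPure.comap_of_injective {g : Z →ₗ[T] X} (hg : Function.Injective g)
    {P : Submodule T X} (hP : IsPure P) (hle : P ≤ LinearMap.range g) : IsPure (P.comap g) := by
  intro m n r φ hφ
  obtain ⟨ψ, hψ, hψr⟩ := hP r (g ∘ₗ φ) hφ
  obtain ⟨ψ', hψ'⟩ := Module.projective_lifting_property g.rangeRestrict
    (ψ.codRestrict _ fun v ↦ hle (hψ v)) g.surjective_rangeRestrict
  have g_ψ' (v : Fin n → T) : g (ψ' v) = ψ v := congrArg Subtype.val (LinearMap.congr_fun hψ' v)
  refine ⟨ψ', fun v ↦ ?_, LinearMap.ext fun v ↦ hg ?_⟩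
  · simpa [g_ψ'] using hψ v
  · simpa [g_ψ'] using LinearMap.congr_fun hψr v

lemma isPure_sSup {c : Set (Submodule T X)} (hne : c.Nonempty) (hc : DirectedOn (· ≤ ·) c)
    (h : ∀ P ∈ c, IsPure P) : IsPure (sSup c) := by
  intro m n r φ hφ
  have compact : IsCompactElement (LinearMap.range (φ ∘ₗ r)) :=
    (Submodule.fg_iff_compact _).1 .of_finite
  obtain ⟨P, hP, hle⟩ := (CompleteLattice.isCompactElement_iff_le_of_directed_sSup_le _ _).1
    compact c hne hc (by rintro _ ⟨v, rfl⟩; exact hφ v)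
  obtain ⟨ψ, hψ, hψr⟩ := h P hP r φ fun v ↦ hle ⟨v, rfl⟩
  exact ⟨ψ, fun v ↦ le_sSup hP (hψ v), hψr⟩

lemma IsPure.exists_lift {g : X →ₗ[T] Z} (hg : Function.Surjective g)
    (hker : IsPure (LinearMap.ker g)) {F : Type*} [AddCommGroup F] [Module T F]
    [Module.FinitePresentation T F] (h : F →ₗ[T] Z) : ∃ k : F →ₗ[T] X, g ∘ₗ k = h := by
  obtain ⟨n, m, π, r, hπ, hrπ⟩ := Module.FinitePresentation.exists_fin' T F
  obtain ⟨φ, hφ⟩ := Module.projective_lifting_property g (h ∘ₗ π) hg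
  have g_φ (v : Fin n → T) : g (φ v) = h (π v) := LinearMap.congr_fun hφ v
  obtain ⟨ψ, hψ, hψr⟩ := hker r φ fun v ↦ by
    rw [LinearMap.mem_ker, g_φ, hrπ.apply_apply_eq_zero, map_zero]
  have ker_le : LinearMap.ker π ≤ LinearMap.ker (φ - ψ) := by
    rw [hrπ.linearMap_ker_eq]
    rintro _ ⟨v, rfl⟩
    simpa [sub_eq_zero] using (LinearMap.congr_fun hψr v).symm
  refine ⟨(LinearMap.ker π).liftQ (φ - ψ) ker_le ∘ₗ
    (π.quotKerEquivOfSurjective hπ).symm.toLinearMap, LinearMap.ext fun x ↦ ?_⟩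
  obtain ⟨v, rfl⟩ := hπ x
  have g_ψ : g (ψ v) = 0 := hψ v
  have symm_π : (π.quotKerEquivOfSurjective hπ).symm (π v) = (LinearMap.ker π).mkQ v := by
    rw [LinearEquiv.symm_apply_eq]; rfl
  simp [symm_π, g_φ, g_ψ]

lemma ker_mkQ_submoduleComap (D : Submodule T X) (P : Submodule T (X ⧸ D)) :
    LinearMap.ker (D.mkQ.submoduleComap P) = D.comap (P.comap D.mkQ).subtype := by
  ext y
  simp [Subtype.ext_iff]

lemma exact_inclusion_mkQ_submoduleComap (D : Submodule T X) (P : Submodule T (X ⧸ D)) :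
    Function.Exact (Submodule.inclusion (Submodule.le_comap_mkQ D P))
      (D.mkQ.submoduleComap P) := by
  rw [LinearMap.exact_iff, ker_mkQ_submoduleComap, Submodule.range_inclusion]

/-- Formal expressions built from one generator by the module operations and by the components
of solutions of finite linear systems. They index the elements of a pure submodule containing a
given element, with a bound on its size which depends only on `T`. -/
inductive PureTerm (T : Type u) [Ring T] : Type u
  | generator : PureTerm T
  | zero : PureTerm T
  | add (a b : PureTerm T) : PureTerm T
  | smul (t : T) (a : PureTerm T) : PureTerm T
  | solution {m n : ℕ} (r : (Fin m → T) →ₗ[T] (Fin n → T)) (b : Fin m → PureTerm T)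
      (j : Fin n) : PureTerm T

/-- The value of a term at `x`. A solution of the system with coefficients `r` is picked by
`Function.invFun`, so it is a junk value if the system is not solvable. -/
noncomputable def PureTerm.eval (x : X) : PureTerm T → X
  | generator => x
  | zero => 0
  | add a b => a.eval x + b.eval x
  | smul t a => t • a.eval x
  | solution r b j =>
      Function.invFun (fun φ : _ →ₗ[T] X ↦ φ ∘ₗ r)
        (Fintype.linearCombination T fun i ↦ (b i).eval x) (Pi.single j 1)

/-- A pure submodule containing `x`, generated by the values of all terms. It depends on the
choice of solutions and is not claimed to be the smallest one. -/
noncomputable def pureHull (T : Type u) [Ring T] [Module T X] (x : X) : Submodule T X :=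
  LinearMap.range (Finsupp.linearCombination T (PureTerm.eval (T := T) x))

lemma mem_pureHull_iff {x y : X} : y ∈ pureHull T x ↔ ∃ a : PureTerm T, a.eval x = y := by
  rw [pureHull, Finsupp.range_linearCombination]
  refine ⟨fun hy ↦ ?_, fun ⟨a, ha⟩ ↦ Submodule.subset_span ⟨a, ha⟩⟩
  induction hy using Submodule.span_induction with
  | mem _ h => exact h
  | zero => exact ⟨.zero, rfl⟩
  | add _ _ _ _ ha hb =>
    obtain ⟨⟨a, rfl⟩, b, rfl⟩ := And.intro ha hb
    exact ⟨.add a b, rfl⟩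
  | smul t _ _ ha =>
    obtain ⟨a, rfl⟩ := ha
    exact ⟨.smul t a, rfl⟩

lemma self_mem_pureHull (x : X) : x ∈ pureHull T x :=
  mem_pureHull_iff.2 ⟨.generator, rfl⟩

lemma isPure_pureHull (x : X) : IsPure (pureHull T x) := by
  intro m n r φ hφ
  choose b hb using fun i ↦ mem_pureHull_iff.1 (hφ (Pi.single i 1))
  have rhs_eq : Fintype.linearCombination T (fun i ↦ (b i).eval x) = φ ∘ₗ r :=
    LinearMap.pi_ext' fun i ↦ by ext; simp [hb]
  let precomp (φ : (Fin n → T) →ₗ[T] X) : (Fin m → T) →ₗ[T] X := φ ∘ₗ r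
  have basis_mem (j : Fin n) :
      Function.invFun precomp (φ ∘ₗ r) (Pi.single j 1) ∈ pureHull T x :=
    mem_pureHull_iff.2 ⟨.solution r b j, by rw [PureTerm.eval, rhs_eq]⟩
  refine ⟨Function.invFun precomp (φ ∘ₗ r), fun v ↦ ?_,
    Function.invFun_eq (f := precomp) ⟨φ, rfl⟩⟩
  rw [LinearMap.pi_apply_eq_sum_univ]
  exact Submodule.sum_mem _ fun j _ ↦ Submodule.smul_mem _ _ (by
    convert basis_mem j
    simp only [Pi.single_apply, eq_comm])

variable {J C : Type*} [AddCommGroup J] [Module T J] [AddCommGroup C] [Module T C]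
  {p : J →ₗ[T] C} {f : X →ₗ[T] C}

/-- A lift of `f` through `p`, defined on a pure submodule. -/
structure IsPurePartialLift (p : J →ₗ[T] C) (f : X →ₗ[T] C) (s : X →ₗ.[T] J) : Prop where
  isPure_domain : IsPure s.domain
  apply_eq (x : s.domain) : p (s x) = f x

lemma isPurePartialLift_bot (p : J →ₗ[T] C) (f : X →ₗ[T] C) : IsPurePartialLift p f ⊥ where
  isPure_domain := isPure_bot
  apply_eq x := by
    obtain rfl : x = 0 := Subsingleton.elim (α := (⊥ : Submodule T X)) _ _
    simp

lemma isPurePartialLift_sSup {c : Set (X →ₗ.[T] J)} (hne : c.Nonempty)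
    (hc : DirectedOn (· ≤ ·) c) (h : ∀ s ∈ c, IsPurePartialLift p f s) :
    IsPurePartialLift p f (LinearPMap.sSup c hc) where
  isPure_domain := by
    refine isPure_sSup (hne.image _) (hc.mono_comp fun _ _ hle ↦ hle.1) ?_
    rintro _ ⟨s, hs, rfl⟩
    exact (h s hs).isPure_domain
  apply_eq := by
    rintro ⟨x, hx⟩
    obtain ⟨s, hs, hxs⟩ := (LinearPMap.mem_domain_sSup_iff hne hc).1 hx
    exact (congrArg p (LinearPMap.sSup_apply hc hs ⟨x, hxs⟩)).trans ((h s hs).apply_eq ⟨x, hxs⟩)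

lemma exists_maximal_isPurePartialLift (p : J →ₗ[T] C) (f : X →ₗ[T] C) :
    ∃ s, Maximal (IsPurePartialLift p f) s := by
  refine zorn_le₀ {s | IsPurePartialLift p f s} fun c hc hchain ↦ ?_
  rcases c.eq_empty_or_nonempty with rfl | hne
  · exact ⟨⊥, isPurePartialLift_bot p f, by simp⟩
  · exact ⟨_, isPurePartialLift_sSup hne hchain.directedOn hc,
      fun _ ↦ LinearPMap.le_sSup hchain.directedOn⟩

lemma exists_lift_of_forall_isPurePartialLift
    (h : ∀ s, IsPurePartialLift p f s → s.domain ≠ ⊤ → ∃ s' > s, IsPurePartialLift p f s') :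
    ∃ g : X →ₗ[T] J, p ∘ₗ g = f := by
  obtain ⟨s, hs, hmax⟩ := exists_maximal_isPurePartialLift p f
  have domain_eq_top : s.domain = ⊤ := by
    by_contra hne
    obtain ⟨s', hlt, hs'⟩ := h s hs hne
    exact hlt.not_ge (hmax hs' hlt.le)
  exact ⟨s.toFun ∘ₗ (LinearEquiv.ofTop _ domain_eq_top).symm.toLinearMap,
    LinearMap.ext fun x ↦ hs.apply_eq _⟩

end Purity

section PureDeconstruction

variable {R : Type u} [Ring R]

section PureSES

lemma pureSES_of_isPure_ker {S : ShortComplex (ModuleCat.{u} Rᵐᵒᵖ)} (hS : S.ShortExact)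
    (h : IsPure (LinearMap.ker S.g.hom)) : PureSES S := by
  refine ⟨hS, fun F _ f ↦ ?_⟩
  obtain ⟨k, hk⟩ := h.exists_lift hS.moduleCat_surjective_g f.hom
  exact ⟨ModuleCat.ofHom k, ModuleCat.hom_ext hk⟩

lemma pureSES_of_exact {A B C : Type u} [AddCommGroup A] [Module Rᵐᵒᵖ A] [AddCommGroup B]
    [Module Rᵐᵒᵖ B] [AddCommGroup C] [Module Rᵐᵒᵖ C] {f : A →ₗ[Rᵐᵒᵖ] B} {g : B →ₗ[Rᵐᵒᵖ] C}
    (hfg : Function.Exact f g) (hf : Function.Injective f) (hg : Function.Surjective g)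
    (h : IsPure (LinearMap.ker g)) :
    PureSES (ShortComplex.moduleCatMk f g hfg.linearMap_comp_eq_zero) :=
  pureSES_of_isPure_ker (ModuleCat.shortComplex_shortExact _ hfg hf hg) h

variable {X : Type u} [AddCommGroup X] [Module Rᵐᵒᵖ X] {D : Submodule Rᵐᵒᵖ X}

lemma IsPure.pureSES_mkQ (hD : IsPure D) :
    PureSES (ShortComplex.moduleCatMk D.subtype D.mkQ
      (LinearMap.exact_subtype_mkQ D).linearMap_comp_eq_zero) :=
  pureSES_of_exact (LinearMap.exact_subtype_mkQ D) D.injective_subtype D.mkQ_surjective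
    (by rwa [Submodule.ker_mkQ])

lemma IsPure.pureSES_submoduleComap (hD : IsPure D) (P : Submodule Rᵐᵒᵖ (X ⧸ D)) :
    PureSES (ShortComplex.moduleCatMk _ _
      (exact_inclusion_mkQ_submoduleComap D P).linearMap_comp_eq_zero) := by
  refine pureSES_of_exact (exact_inclusion_mkQ_submoduleComap D P)
    (Submodule.inclusion_injective _)
    (LinearMap.submoduleComap_surjective_of_surjective _ _ D.mkQ_surjective) ?_
  rw [ker_mkQ_submoduleComap]
  exact hD.comap_of_injective (P.comap D.mkQ).injective_subtype
    ((Submodule.le_comap_mkQ D P).trans (Submodule.range_subtype _).ge)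

end PureSES

/-- Closure of a class under quotients by pure submodules. -/
def ClosedUnderPureQuotients (𝒳 : Set (ModuleCat.{u} Rᵐᵒᵖ)) : Prop :=
  ∀ S : ShortComplex (ModuleCat.{u} Rᵐᵒᵖ), PureSES S → S.X₂ ∈ 𝒳 → S.X₃ ∈ 𝒳

/-- Closure of a class under pure submodules, given as left-hand terms of pure exact sequences. -/
def ClosedUnderPureSubmodules (𝒳 : Set (ModuleCat.{u} Rᵐᵒᵖ)) : Prop :=
  ∀ S : ShortComplex (ModuleCat.{u} Rᵐᵒᵖ), PureSES S → S.X₂ ∈ 𝒳 → S.X₁ ∈ 𝒳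

namespace ExactStructure

variable {E : ExactStructure (ModuleCat.{u} Rᵐᵒᵖ)} {𝒳 𝒴 : Set (ModuleCat.{u} Rᵐᵒᵖ)}

/- A lift `s` of `S.g` need not descend to a section, since `S.f ≫ s` need not vanish; as it takes
values in `Y`, pure injectivity extends it to a correction term. -/
lemma closedUnderPureQuotients_leftPerp (h𝒴 : ∀ Y ∈ 𝒴, PureInjective Y) :
    ClosedUnderPureQuotients (E.leftPerp 𝒴) := by
  intro S hS hS₂ Y hY
  refine ext1Zero_of_exists_section fun Z i p w hip ↦ ?_
  have hse := E.shortExact_of_conflation _ hip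
  have := hse.mono_f
  have := hS.1.epi_g
  obtain ⟨s, hs⟩ : ∃ s : S.X₂ ⟶ Z, s ≫ p = S.g := (hS₂ Y hY).exists_lift hip S.g
  obtain ⟨l, hl⟩ := hse.exact.lift' (S.f ≫ s) (by simp [hs])
  obtain ⟨k, hk⟩ := h𝒴 Y hY S hS l
  obtain ⟨t, ht⟩ := hS.1.exact.desc' (s - k ≫ i) (by
    rw [Preadditive.comp_sub, reassoc_of% hk, sub_eq_zero]; exact hl.symm)
  refine ⟨t, ?_⟩
  rw [← cancel_epi S.g, reassoc_of% ht, Preadditive.sub_comp, hs, assoc, w, comp_zero, sub_zero,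
    comp_id]

lemma Resolving.closedUnderPureSubmodules (h𝒳 : E.Resolving 𝒳)
    (hpure : ∀ S : ShortComplex (ModuleCat.{u} Rᵐᵒᵖ), PureSES S → E.conflation S)
    (hquot : ClosedUnderPureQuotients 𝒳) : ClosedUnderPureSubmodules 𝒳 :=
  fun S hS hS₂ ↦ h𝒳.2.2 S (hpure S hS) hS₂ (hquot S hS hS₂)

lemma exists_isPurePartialLift_domain_eq_comap
    (hpure : ∀ S : ShortComplex (ModuleCat.{u} Rᵐᵒᵖ), PureSES S → E.conflation S)
    {N J C X : ModuleCat.{u} Rᵐᵒᵖ} {i : N ⟶ J} {p : J ⟶ C} {w : i ≫ p = 0}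
    (hip : E.conflation (ShortComplex.mk i p w)) (hJ : E.EInjective J) {f : X ⟶ C}
    {s : X →ₗ.[Rᵐᵒᵖ] J} (hs : IsPurePartialLift p.hom f.hom s)
    {P : Submodule Rᵐᵒᵖ (X ⧸ s.domain)} (hP : IsPure P)
    (hPN : E.Ext1Zero (ModuleCat.of Rᵐᵒᵖ P) N) :
    ∃ s' ≥ s, IsPurePartialLift p.hom f.hom s' ∧ s'.domain = P.comap s.domain.mkQ := by
  have hconf := hpure _ (hs.isPure_domain.pureSES_submoduleComap P)
  let Q := P.comap s.domain.mkQ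
  let ι := ModuleCat.ofHom (Submodule.inclusion (Submodule.le_comap_mkQ s.domain P))
  have : HasLiftingProperty ι p := hJ.hasLiftingProperty hip hconf hPN
  have sq : CommSq (ModuleCat.ofHom s.toFun) ι p (ModuleCat.ofHom Q.subtype ≫ f) :=
    ⟨ModuleCat.hom_ext (LinearMap.ext hs.apply_eq)⟩
  refine ⟨⟨Q, sq.lift.hom⟩, ⟨Submodule.le_comap_mkQ _ P, ?_⟩, ⟨?_, ?_⟩, rfl⟩
  · rintro x ⟨_, _⟩ rfl
    exact (LinearMap.congr_fun (congrArg ModuleCat.Hom.hom sq.fac_left) x).symm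
  · refine .comap_of_surjective (Submodule.mkQ_surjective _) ?_ hP
    rw [Submodule.ker_mkQ]
    exact hs.isPure_domain
  · exact LinearMap.congr_fun (congrArg ModuleCat.Hom.hom sq.fac_right)

/- Transfinite filtration of `X` by pure submodules with consecutive quotients pure hulls of single
elements, organised as an application of Zorn's lemma to partial lifts. -/
lemma ext1Zero_of_forall_pureHull (hinj : E.EnoughInjectives)
    (hpure : ∀ S : ShortComplex (ModuleCat.{u} Rᵐᵒᵖ), PureSES S → E.conflation S)
    {X N : ModuleCat.{u} Rᵐᵒᵖ}
    (h : ∀ D : Submodule Rᵐᵒᵖ X, IsPure D → ∀ y : X ⧸ D,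
      E.Ext1Zero (ModuleCat.of Rᵐᵒᵖ (pureHull Rᵐᵒᵖ y)) N) :
    E.Ext1Zero X N := by
  obtain ⟨J, C, i, p, w, hip, hJ⟩ := hinj N
  refine hJ.ext1Zero_of_exists_lift (T := .mk i p w) (E.shortExact_of_conflation _ hip)
    fun f ↦ ?_
  suffices ∃ g : X →ₗ[Rᵐᵒᵖ] J, p.hom ∘ₗ g = f.hom by
    obtain ⟨g, hg⟩ := this
    exact ⟨ModuleCat.ofHom g, ModuleCat.hom_ext hg⟩
  refine exists_lift_of_forall_isPurePartialLift fun s hs hne ↦ ?_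
  obtain ⟨x, -, hx⟩ := SetLike.exists_of_lt (lt_top_iff_ne_top.2 hne)
  obtain ⟨s', hle, hs', domain_eq⟩ := exists_isPurePartialLift_domain_eq_comap hpure hip hJ hs
    (isPure_pureHull (s.domain.mkQ x)) (h s.domain hs.isPure_domain _)
  have hxs' : x ∈ s'.domain := domain_eq ▸ self_mem_pureHull (s.domain.mkQ x)
  exact ⟨s', lt_of_le_not_ge hle fun hge ↦ hx (hge.1 hxs'), hs'⟩

end ExactStructure

/-- The members of `𝒳` presented as quotients of the free module on `PureTerm Rᵐᵒᵖ`. Up to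
isomorphism these include all pure hulls of elements that lie in `𝒳`. -/
def pureTermQuotients (𝒳 : Set (ModuleCat.{u} Rᵐᵒᵖ)) : Set (ModuleCat.{u} Rᵐᵒᵖ) :=
  𝒳 ∩ Set.range fun K : Submodule Rᵐᵒᵖ (PureTerm Rᵐᵒᵖ →₀ Rᵐᵒᵖ) ↦ ModuleCat.of Rᵐᵒᵖ (_ ⧸ K)

instance small_pureTermQuotients (𝒳 : Set (ModuleCat.{u} Rᵐᵒᵖ)) :
    Small.{u} (pureTermQuotients 𝒳) :=
  small_subset Set.inter_subset_right

lemma exists_mem_pureTermQuotients_iso_pureHull {𝒳 : Set (ModuleCat.{u} Rᵐᵒᵖ)}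
    (h𝒳 : ClosedUnderIsos 𝒳) {X : Type u} [AddCommGroup X] [Module Rᵐᵒᵖ X] {x : X}
    (hx : ModuleCat.of Rᵐᵒᵖ (pureHull Rᵐᵒᵖ x) ∈ 𝒳) :
    ∃ S ∈ pureTermQuotients 𝒳, Nonempty (S ≅ ModuleCat.of Rᵐᵒᵖ (pureHull Rᵐᵒᵖ x)) :=
  let e := (LinearMap.quotKerEquivRange
    (Finsupp.linearCombination Rᵐᵒᵖ (PureTerm.eval (T := Rᵐᵒᵖ) x))).toModuleIso
  ⟨_, ⟨h𝒳 _ _ e.symm hx, _, rfl⟩, ⟨e⟩⟩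

lemma ExactStructure.rightPerp_pureTermQuotients {E : ExactStructure (ModuleCat.{u} Rᵐᵒᵖ)}
    (hinj : E.EnoughInjectives)
    (hpure : ∀ S : ShortComplex (ModuleCat.{u} Rᵐᵒᵖ), PureSES S → E.conflation S)
    {𝒳 : Set (ModuleCat.{u} Rᵐᵒᵖ)} (hiso : ClosedUnderIsos 𝒳)
    (hquot : ClosedUnderPureQuotients 𝒳) (hsub : ClosedUnderPureSubmodules 𝒳) :
    E.rightPerp (pureTermQuotients 𝒳) = E.rightPerp 𝒳 := by
  refine Set.Subset.antisymm (fun N hN X hX ↦ ?_) fun N hN S hS ↦ hN S hS.1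
  refine ext1Zero_of_forall_pureHull hinj hpure fun D hD y ↦ ?_
  have hull_mem : ModuleCat.of Rᵐᵒᵖ (pureHull Rᵐᵒᵖ y) ∈ 𝒳 :=
    hsub _ (isPure_pureHull y).pureSES_mkQ (hquot _ hD.pureSES_mkQ hX)
  obtain ⟨S, hS, ⟨e⟩⟩ := exists_mem_pureTermQuotients_iso_pureHull hiso hull_mem
  exact (hN S hS).of_iso e

end PureDeconstruction

end ExactPaper

open ExactPaper CategoryTheory Limits in
/-- **Theorem 4.4(3)(i)**: let `ℰ` be an exact structure on `Mod R` with enough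
`ℰ`-projectives and `ℰ`-injectives containing all pure exact sequences. If `𝒴` is a class
of pure injective right `R`-modules closed under taking `ℰ`-cosyzygies, then
`(^⊥𝒴, (^⊥𝒴)^⊥)` is a complete hereditary `ℰ`-cotorsion pair. -/
theorem completeHereditaryCotorsionPair_of_pureInjective
    {R : Type u} [Ring R]
    (E : ExactStructure (ModuleCat.{u} Rᵐᵒᵖ))
    (hproj : E.EnoughProjectives) (hinj : E.EnoughInjectives)
    (hpure : ∀ S : ShortComplex (ModuleCat.{u} Rᵐᵒᵖ), PureSES S → E.conflation S)
    (𝒴 : Set (ModuleCat.{u} Rᵐᵒᵖ)) (h𝒴 : ∀ Y ∈ 𝒴, PureInjective Y)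
    (hcosyz : ∀ Y ∈ 𝒴, ∀ (I C : ModuleCat.{u} Rᵐᵒᵖ) (i : Y ⟶ I) (p : I ⟶ C)
      (w : i ≫ p = 0), E.conflation (ShortComplex.mk i p w) → E.EInjective I → C ∈ 𝒴) :
    E.CompleteHereditaryCotorsionPair (E.leftPerp 𝒴) (E.rightPerp (E.leftPerp 𝒴)) := by
  have hres := ExactStructure.resolving_leftPerp hinj hcosyz
  have hquot := ExactStructure.closedUnderPureQuotients_leftPerp (E := E) h𝒴
  have hgen : E.rightPerp (pureTermQuotients (E.leftPerp 𝒴)) = E.rightPerp (E.leftPerp 𝒴) :=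
    ExactStructure.rightPerp_pureTermQuotients hinj hpure (E.closedUnderIsos_leftPerp 𝒴) hquot
      (hres.closedUnderPureSubmodules hpure hquot)
  have hperp := E.leftPerp_rightPerp_leftPerp 𝒴
  have precover := ExactStructure.exists_conflation_precover_of_small.{u} hproj hinj
    (pureTermQuotients (E.leftPerp 𝒴))
  rw [hgen, hperp] at precover
  exact ⟨hperp.symm, rfl, precover,
    ExactStructure.exists_conflation_preenvelope hproj hinj precover, hres⟩
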